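/- Every self-similar function of Cantor type with parameters κ, a, b is nondecreasing on [0,1]. -/

import Mathlib

/-- A continuous function `f : [0,1] → ℝ` is a *self-similar function of Cantor type*
with parameters `κ`, `a`, `b` if `f 0 = 0`, `f 1 = 1`, `f` is constant on each interval
`(α_{2k-1}, α_{2k})` for `k ∈ {1, …, κ-1}` (where `α_{2k} = k(a+b)`, `α_{2k+1} = α_{2k} + a`),
and for each `k ∈ {0, …, κ-1}` the function `x ↦ κ·f(α_{2k} + a·x)` differs from `f`
by an additive constant. -/
def CantorType (κ : ℕ) (a b : ℝ) (f : ℝ → ℝ) : Prop :=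
  ContinuousOn f (Set.Icc 0 1) ∧ f 0 = 0 ∧ f 1 = 1 ∧
  (∀ k : ℕ, 1 ≤ k → k ≤ κ - 1 →
    ∃ c : ℝ, ∀ x ∈ Set.Ioo (((k : ℝ) - 1) * (a + b) + a) ((k : ℝ) * (a + b)), f x = c) ∧
  (∀ k : ℕ, k ≤ κ - 1 → ∃ c : ℝ, ∀ x ∈ Set.Icc (0 : ℝ) 1,
    (κ : ℝ) * f ((k : ℝ) * (a + b) + a * x) = f x + c)

/-!
Let `x ∈ [0, 1]` lie in the period `[k(a+b), (k+1)(a+b))`. Rescaling the block `[k(a+b), k(a+b)+a]`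
to `[0, 1]` and collapsing the gap after it onto its right end sends `x` to a point `T x`, and
self-similarity becomes `κ f(x) = k + f(T x)`: iterating `T` produces the base-`κ` digits of `f x`.
Since `0 ≤ k ≤ κ - 1`, passing from `x` to `T x` multiplies `-f` and `f - 1` by at least `κ > 1`.
A bounded quantity cannot be expanded like this where it is positive, so `0 ≤ f ≤ 1`. It follows
that `f x - f y`, for `x ≤ y`, is positive only if `x` and `y` have the same `k`, and then passing
to `T x ≤ T y` multiplies it by `κ`; so it is never positive.
-/

open Set

theorem nonpos_of_forall_exists_mul_le {α : Type*} {s : Set α} {g : α → ℝ} {c : ℝ} (hc : 1 < c)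
    (hbdd : BddAbove (g '' s)) (hexp : ∀ x ∈ s, 0 < g x → ∃ y ∈ s, c * g x ≤ g y) :
    ∀ x ∈ s, g x ≤ 0 := by
  intro x hx
  by_contra! hpos
  have le_sup : ∀ y ∈ s, g y ≤ sSup (g '' s) := fun y hy ↦ le_csSup hbdd (mem_image_of_mem g hy)
  have sup_pos : 0 < sSup (g '' s) := hpos.trans_le (le_sup x hx)
  have le_sup_div : ∀ y ∈ s, g y ≤ sSup (g '' s) / c := by
    intro y hy
    rcases le_or_gt (g y) 0 with hy_nonpos | hy_pos
    · exact hy_nonpos.trans (by positivity)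
    · obtain ⟨z, hz, hyz⟩ := hexp y hy hy_pos
      rw [le_div_iff₀' (by positivity)]
      exact hyz.trans (le_sup z hz)
  have sup_le : sSup (g '' s) ≤ sSup (g '' s) / c :=
    csSup_le (nonempty_of_mem (mem_image_of_mem g hx)) (forall_mem_image.2 le_sup_div)
  exact (div_lt_self sup_pos hc).not_ge sup_le

theorem apply_eq_left_of_eqOn_const_Ioo {X Y : Type*} [LinearOrder X] [TopologicalSpace X]
    [OrderTopology X] [DenselyOrdered X] [TopologicalSpace Y] [T2Space Y] {f : X → Y} {p q : X}
    {c : Y} (hf : ContinuousOn f (Icc p q)) (hc : EqOn f (fun _ ↦ c) (Ioo p q)) {x : X}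
    (hx : x ∈ Icc p q) : f x = f p := by
  rcases eq_or_ne p q with rfl | hpq
  · rw [Icc_self, mem_singleton_iff] at hx
    rw [hx]
  · have heq : EqOn f (fun _ ↦ c) (Icc p q) :=
      EqOn.of_subset_closure hc hf continuousOn_const Ioo_subset_Icc_self (closure_Ioo hpq).ge
    rw [heq hx, heq (left_mem_Icc.2 (hx.1.trans hx.2))]

/-- `f` is read off on `s` from base-`c` digits: `d x` is the leading digit of `x`, and `T` shifts
the expansion by one place, so that `f x = d x / c + f (T x) / c`. -/
structure IsDigitExpansion {α : Type*} (c : ℝ) (d : α → ℕ) (T : α → α) (s : Set α) (f : α → ℝ) :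
    Prop where
  mapsTo : MapsTo T s s
  digit_add_one_le : ∀ x ∈ s, (d x : ℝ) + 1 ≤ c
  mul_apply : ∀ x ∈ s, c * f x = d x + f (T x)

namespace IsDigitExpansion

variable {α : Type*} {c : ℝ} {d : α → ℕ} {T : α → α} {s : Set α} {f : α → ℝ}

theorem apply_le_one (hf : IsDigitExpansion c d T s f) (hc : 1 < c) (hbdd : BddAbove (f '' s)) :
    ∀ x ∈ s, f x ≤ 1 := by
  suffices ∀ x ∈ s, f x - 1 ≤ 0 from fun x hx ↦ sub_nonpos.1 (this x hx)
  refine nonpos_of_forall_exists_mul_le hc ?_ fun x hx _ ↦ ⟨T x, hf.mapsTo hx, ?_⟩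
  · obtain ⟨M, hM⟩ := hbdd
    exact ⟨M - 1, forall_mem_image.2 fun x hx ↦ by grw [hM (mem_image_of_mem f hx)]⟩
  · linarith [hf.mul_apply x hx, hf.digit_add_one_le x hx]

theorem apply_nonneg (hf : IsDigitExpansion c d T s f) (hc : 1 < c) (hbdd : BddBelow (f '' s)) :
    ∀ x ∈ s, 0 ≤ f x := by
  suffices ∀ x ∈ s, -f x ≤ 0 from fun x hx ↦ neg_nonpos.1 (this x hx)
  refine nonpos_of_forall_exists_mul_le hc ?_ fun x hx _ ↦ ⟨T x, hf.mapsTo hx, ?_⟩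
  · obtain ⟨m, hm⟩ := hbdd
    exact ⟨-m, forall_mem_image.2 fun x hx ↦ neg_le_neg (hm (mem_image_of_mem f hx))⟩
  · linarith [hf.mul_apply x hx, (d x).cast_nonneg (α := ℝ)]

theorem monotoneOn [Preorder α] (hf : IsDigitExpansion c d T s f) (hc : 1 < c)
    (habove : BddAbove (f '' s)) (hbelow : BddBelow (f '' s)) (hd : MonotoneOn d s)
    (hT : ∀ x ∈ s, ∀ y ∈ s, x ≤ y → d x = d y → T x ≤ T y) : MonotoneOn f s := by
  have le_one := hf.apply_le_one hc habove
  have nonneg := hf.apply_nonneg hc hbelow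
  suffices ∀ p ∈ {p : α × α | p.1 ∈ s ∧ p.2 ∈ s ∧ p.1 ≤ p.2}, f p.1 - f p.2 ≤ 0 from
    fun x hx y hy hxy ↦ sub_nonpos.1 (this (x, y) ⟨hx, hy, hxy⟩)
  refine nonpos_of_forall_exists_mul_le hc ⟨1, ?_⟩ ?_
  · rintro _ ⟨p, ⟨hx, hy, -⟩, rfl⟩
    linarith [le_one _ hx, nonneg _ hy]
  · rintro ⟨x, y⟩ ⟨hx, hy, hxy⟩ hpos
    have expand : c * (f x - f y) = (d x - d y) + (f (T x) - f (T y)) := by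
      linarith [hf.mul_apply x hx, hf.mul_apply y hy]
    rcases (hd hx hy hxy).eq_or_lt with same_digit | digit_lt
    · refine ⟨(T x, T y), ⟨hf.mapsTo hx, hf.mapsTo hy, hT x hx y hy hxy same_digit⟩, ?_⟩
      simp only [expand, same_digit, sub_self, zero_add, le_refl]
    · have digit_le : (d x : ℝ) + 1 ≤ d y := mod_cast digit_lt
      have expanded_pos : 0 < c * (f x - f y) := mul_pos (by positivity) hpos
      linarith [le_one _ (hf.mapsTo hx), nonneg _ (hf.mapsTo hy)]

end IsDigitExpansion

/-- The index `k` of the period `[k(a+b), (k+1)(a+b))` containing `x ≥ 0`. -/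
noncomputable def cantorDigit (a b x : ℝ) : ℕ := ⌊x / (a + b)⌋₊

/-- The block `[k(a+b), k(a+b)+a]` of the period containing `x ≥ 0`, rescaled to `[0, 1]`. The gap
following the block is sent to `1`, as a function of Cantor type takes there its value at the right
end of the block. -/
noncomputable def cantorShift (a b x : ℝ) : ℝ := min 1 ((x - cantorDigit a b x * (a + b)) / a)

section Digits

variable {a b x y : ℝ}

theorem cantorDigit_mul_le (hab : 0 < a + b) (hx : 0 ≤ x) : cantorDigit a b x * (a + b) ≤ x :=
  (le_div_iff₀ hab).1 (Nat.floor_le (by positivity))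

theorem lt_cantorDigit_add_one_mul (hab : 0 < a + b) : x < (cantorDigit a b x + 1) * (a + b) :=
  (div_lt_iff₀ hab).1 (Nat.lt_floor_add_one _)

theorem cantorDigit_mono (hab : 0 ≤ a + b) : Monotone (cantorDigit a b) :=
  fun _ _ hxy ↦ Nat.floor_mono (by gcongr)

theorem cantorDigit_lt {n : ℕ} (hab : 0 < a + b) (hx : 0 ≤ x) (hxn : x < n * (a + b)) :
    cantorDigit a b x < n :=
  (Nat.floor_lt (by positivity)).2 ((div_lt_iff₀ hab).2 hxn)

theorem cantorShift_mem_Icc (ha : 0 ≤ a) (hab : 0 < a + b) (hx : 0 ≤ x) :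
    cantorShift a b x ∈ Icc 0 1 :=
  ⟨le_min zero_le_one (div_nonneg (sub_nonneg.2 (cantorDigit_mul_le hab hx)) ha), min_le_left _ _⟩

theorem cantorShift_le_cantorShift (ha : 0 ≤ a) (hxy : x ≤ y)
    (hdigit : cantorDigit a b x = cantorDigit a b y) : cantorShift a b x ≤ cantorShift a b y := by
  unfold cantorShift
  rw [hdigit]
  gcongr

theorem cantorDigit_mul_add_mul_cantorShift (ha : 0 < a) :
    cantorDigit a b x * (a + b) + a * cantorShift a b x =
      min (cantorDigit a b x * (a + b) + a) x := by
  rw [cantorShift, mul_min_of_nonneg _ _ ha.le, mul_one, mul_div_cancel₀ _ ha.ne',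
    ← min_add_add_left, add_sub_cancel]

end Digits

namespace CantorType

variable {κ k : ℕ} {a b x t : ℝ} {f : ℝ → ℝ}

theorem apply_eq_of_mem_gap (hf : CantorType κ a b f) (ha : 0 ≤ a) (hb : 0 ≤ b)
    (hlen : κ * (a + b) = 1 + b) (hk : k + 1 < κ)
    (hx : x ∈ Icc (k * (a + b) + a) ((k + 1) * (a + b))) : f x = f (k * (a + b) + a) := by
  obtain ⟨hcont, -, -, hgap, -⟩ := hf
  obtain ⟨c, hc⟩ := hgap (k + 1) k.succ_pos (Nat.le_sub_one_of_lt hk)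
  push_cast at hc
  rw [add_sub_cancel_right] at hc
  have gap_subset : Icc (k * (a + b) + a) ((k + 1) * (a + b)) ⊆ Icc 0 1 := by
    have hk' : (k : ℝ) + 1 + 1 ≤ κ := mod_cast hk
    have : ((k : ℝ) + 1 + 1) * (a + b) ≤ 1 + b := by grw [hk', hlen]
    exact Icc_subset_Icc (by positivity) (by linarith)
  exact apply_eq_left_of_eqOn_const_Ioo (hcont.mono gap_subset) hc hx

theorem mul_apply_block_sub_start (hf : CantorType κ a b f) (hk : k < κ) (ht : t ∈ Icc 0 1) :
    κ * f (k * (a + b) + a * t) - κ * f (k * (a + b)) = f t := by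
  obtain ⟨-, hzero, -, -, hself⟩ := hf
  obtain ⟨c, hc⟩ := hself k (Nat.le_sub_one_of_lt hk)
  have at_zero := hc 0 (left_mem_Icc.2 zero_le_one)
  rw [mul_zero, add_zero, hzero] at at_zero
  linarith [hc t ht]

theorem mul_apply_block_start (hf : CantorType κ a b f) (ha : 0 ≤ a) (hb : 0 ≤ b)
    (hlen : κ * (a + b) = 1 + b) (hk : k < κ) : κ * f (k * (a + b)) = k := by
  induction k with
  | zero => simp [hf.2.1]
  | succ k ih =>
    have hk' : k < κ := k.lt_succ_self.trans hk
    have across_gap : f ((k + 1) * (a + b)) = f (k * (a + b) + a) :=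
      hf.apply_eq_of_mem_gap ha hb hlen hk ⟨by linarith, le_rfl⟩
    have across_block := hf.mul_apply_block_sub_start hk' (right_mem_Icc.2 zero_le_one)
    rw [mul_one, hf.2.2.1] at across_block
    push_cast
    rw [across_gap]
    linarith [ih hk']

theorem mul_apply_block (hf : CantorType κ a b f) (ha : 0 ≤ a) (hb : 0 ≤ b)
    (hlen : κ * (a + b) = 1 + b) (hk : k < κ) (ht : t ∈ Icc 0 1) :
    κ * f (k * (a + b) + a * t) = k + f t := by
  linarith [hf.mul_apply_block_sub_start hk ht, hf.mul_apply_block_start ha hb hlen hk]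

theorem apply_min_block_end (hf : CantorType κ a b f) (ha : 0 ≤ a) (hb : 0 ≤ b)
    (hlen : κ * (a + b) = 1 + b) (hk : k < κ) (hx : x ≤ 1) (hxk : x ≤ (k + 1) * (a + b)) :
    f (min (k * (a + b) + a) x) = f x := by
  rcases le_or_gt x (k * (a + b) + a) with hblock | hgap
  · rw [min_eq_right hblock]
  · rw [min_eq_left hgap.le]
    have not_last : k + 1 ≠ κ := by
      rintro rfl
      push_cast at hlen
      linarith
    exact (hf.apply_eq_of_mem_gap ha hb hlen (by omega) ⟨hgap.le, hxk⟩).symm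

theorem isDigitExpansion (hf : CantorType κ a b f) (ha : 0 < a) (hb : 0 < b)
    (hlen : κ * (a + b) = 1 + b) :
    IsDigitExpansion κ (cantorDigit a b) (cantorShift a b) (Icc 0 1) f := by
  have hab : 0 < a + b := add_pos ha hb
  have digit_lt : ∀ x ∈ Icc (0 : ℝ) 1, cantorDigit a b x < κ := fun x hx ↦
    cantorDigit_lt hab hx.1 (by linarith [hx.2])
  refine ⟨fun x hx ↦ cantorShift_mem_Icc ha.le hab hx.1, fun x hx ↦ mod_cast digit_lt x hx,
    fun x hx ↦ ?_⟩
  rw [← hf.mul_apply_block ha.le hb.le hlen (digit_lt x hx) (cantorShift_mem_Icc ha.le hab hx.1),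
    cantorDigit_mul_add_mul_cantorShift ha,
    hf.apply_min_block_end ha.le hb.le hlen (digit_lt x hx) hx.2
      (lt_cantorDigit_add_one_mul hab).le]

end CantorType

theorem cantorType_monotoneOn (κ : ℕ) (a b : ℝ) (hκ : 2 ≤ κ)
    (ha : 0 < a) (ha' : a < 1 / κ) (hb : b = (1 - κ * a) / (κ - 1))
    (f : ℝ → ℝ) (hf : CantorType κ a b f) :
    MonotoneOn f (Set.Icc 0 1) := by
  have one_lt : (1 : ℝ) < κ := mod_cast hκ
  have blocks_lt : κ * a < 1 := (lt_div_iff₀' (by positivity)).1 ha'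
  have gap_pos : 0 < b := hb ▸ div_pos (sub_pos.2 blocks_lt) (sub_pos.2 one_lt)
  have hlen : κ * (a + b) = 1 + b := by
    have : b * (κ - 1) = 1 - κ * a := (eq_div_iff (sub_pos.2 one_lt).ne').1 hb
    linarith
  have compact_image : IsCompact (f '' Icc 0 1) := isCompact_Icc.image_of_continuousOn hf.1
  exact (hf.isDigitExpansion ha gap_pos hlen).monotoneOn one_lt compact_image.bddAbove
    compact_image.bddBelow ((cantorDigit_mono (by positivity)).monotoneOn _)
    fun _ _ _ _ hxy hdigit ↦ cantorShift_le_cantorShift ha.le hxy hdigit
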